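/- If q ∈ 𝕊 is a non-real coquaternion with dv(q) < 0, then q is similar to the perplex number re(q) + √(−dv(q)) j, i.e. there exists an invertible h ∈ 𝕊 such that h⁻¹ q h = re(q) + √(−dv(q)) j. -/

import Mathlib

open Quaternion Polynomial

noncomputable section

/-- The real algebra of coquaternions (split quaternions):
basis `1, i, j, k` with `i² = -1`, `j² = k² = 1`, `ij = -ji = k`. -/
abbrev CoQ : Type := ℍ[ℝ, -1, 1]

/-- The determinant of a coquaternion: `det q = q₀² + q₁² - q₂² - q₃²` (equals `q * star q`). -/
def coDet (q : CoQ) : ℝ := q.re ^ 2 + q.imI ^ 2 - q.imJ ^ 2 - q.imK ^ 2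

/-- The determinant of the vector part of a coquaternion: `dv q = q₁² - q₂² - q₃²`. -/
def coDv (q : CoQ) : ℝ := q.imI ^ 2 - q.imJ ^ 2 - q.imK ^ 2

theorem coQ_aux (q p h : CoQ) (hd : coDet h ≠ 0) (e : q * h = h * p) :
    ∃ u : CoQˣ, (↑u⁻¹ : CoQ) * q * ↑u = p := by
  have h1 : h * ((coDet h)⁻¹ • (⟨h.re, -h.imI, -h.imJ, -h.imK⟩ : CoQ)) = 1 := by
    rw [mul_smul_comm, inv_smul_eq_iff₀ hd]
    ext <;> simp [coDet] <;> ring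
  have h2 : ((coDet h)⁻¹ • (⟨h.re, -h.imI, -h.imJ, -h.imK⟩ : CoQ)) * h = 1 := by
    rw [smul_mul_assoc, inv_smul_eq_iff₀ hd]
    ext <;> simp [coDet] <;> ring
  refine ⟨⟨h, _, h1, h2⟩, ?_⟩
  rw [mul_assoc, Units.inv_mul_eq_iff_eq_mul]
  exact e

/-- A non-real coquaternion with `dv q < 0` is similar to the perplex number
`re q + √(-dv q) j`. -/
theorem stmt_3 (q : CoQ) (hq : ¬(q.imI = 0 ∧ q.imJ = 0 ∧ q.imK = 0))
    (hdv : coDv q < 0) :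
    ∃ u : CoQˣ, (↑u⁻¹ : CoQ) * q * ↑u = (⟨q.re, 0, Real.sqrt (-coDv q), 0⟩ : CoQ) := by
  obtain ⟨r, a, b, c⟩ := q
  have hs0 : 0 < Real.sqrt (-coDv ⟨r, a, b, c⟩) := Real.sqrt_pos.mpr (by linarith)
  have hs2 : Real.sqrt (-coDv ⟨r, a, b, c⟩) ^ 2 = -coDv ⟨r, a, b, c⟩ :=
    Real.sq_sqrt (by linarith)
  generalize Real.sqrt (-coDv ⟨r, a, b, c⟩) = s at hs0 hs2 ⊢
  simp only [coDv] at hs2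
  by_cases hb : s + b = 0
  · have hb' : b = -s := by linarith
    subst hb'
    refine coQ_aux _ _ ⟨-a, 0, c, s - -s⟩ ?_ ?_
    · have : coDet ⟨-a, 0, c, s - -s⟩ = -4 * s ^ 2 := by
        simp only [coDet]; linear_combination hs2
      rw [this]; positivity
    · ext <;> simp <;> first | ring1 | linear_combination hs2 | linear_combination -hs2
  · refine coQ_aux _ _ ⟨0, a, b + s, c⟩ ?_ ?_
    · have : coDet ⟨0, a, b + s, c⟩ = -2 * (s * (s + b)) := by
        simp only [coDet]; linear_combination hs2
      rw [this]
      exact mul_ne_zero (by norm_num) (mul_ne_zero hs0.ne' hb)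
    · ext <;> simp <;> first | ring1 | linear_combination hs2 | linear_combination -hs2
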